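/- Fix a miscoverage level α ∈ (0,1), integers n ≥ 1 and K ≥ 1 with ⌈(1−α)(n+1)⌉ ≤ n. Let (Ẑ_0,Z_0),(Ẑ_1,Z_1),…,(Ẑ_n,Z_n) be exchangeable random pairs taking values in ℝ^K × ℝ^K (their joint law is invariant under any permutation of the n+1 indices). For each k ∈ {1,…,K} let s_k : ℝ×ℝ → ℝ be a measurable nonconformity score function and let G_k : ℝ → ℝ be a fixed (deterministic) nondecreasing function. Define the transformed scores s̄_i = max_{1≤k≤K} G_k(s_k(Ẑ_{i,k}, Z_{i,k})) for i = 0,1,…,n, and let λ̂ be the ⌈(1−α)(n+1)⌉-th smallest value among s̄_1,…,s̄_n. Then Pr{ for all k ∈ {1,…,K}: G_k(s_k(Ẑ_{0,k}, Z_{0,k})) ≤ λ̂ } ≥ 1−α; equivalently, with prediction sets C_k(Ẑ_0) = { z ∈ ℝ : G_k(s_k(Ẑ_{0,k}, z)) ≤ λ̂ }, one has Pr{ ∩_{k=1}^K { Z_{0,k} ∈ C_k(Ẑ_0) } } ≥ 1−α. -/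

import Mathlib

open MeasureTheory

/-- The `k`-th smallest value among `f 0, …, f (n-1)` (for `1 ≤ k ≤ n`), defined as
`inf{ t : at least k of the values are ≤ t }`. -/
noncomputable def kthSmallest {n : ℕ} (f : Fin n → ℝ) (k : ℕ) : ℝ :=
  sInf {t : ℝ | k ≤ {i : Fin n | f i ≤ t}.ncard}


/-- At least `m` indices have fewer than `m` strictly smaller values. -/
lemma card_rank_ge {N m : ℕ} (hm : m ≤ N) (v : Fin N → ℝ) :
    m ≤ ∑ j, if (∑ i, if v i < v j then 1 else 0) < m then 1 else 0 := by
  classical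
  simp only [Finset.sum_boole, Nat.cast_id]
  by_cases hB : (Finset.univ.filter
      (fun j => ¬ (Finset.univ.filter (fun i => v i < v j)).card < m)).Nonempty
  · obtain ⟨j, hj, hmin⟩ := Finset.exists_min_image _ v hB
    simp only [Finset.mem_filter, Finset.mem_univ, true_and, not_lt] at hj hmin
    refine hj.trans (Finset.card_le_card ?_)
    intro i hi
    simp only [Finset.mem_filter, Finset.mem_univ, true_and] at hi ⊢
    by_contra hc
    exact absurd (hmin i (not_lt.mp hc)) (not_le.mpr hi)
  · rw [Finset.not_nonempty_iff_eq_empty, Finset.filter_eq_empty_iff] at hB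
    rw [Finset.filter_true_of_mem (fun x hx => not_not.mp (hB hx))]
    simpa using hm

/-- If fewer than `m` values lie strictly below `v 0`, then `v 0` is at most the
`m`-th smallest of the other ones. -/
lemma le_kthSmallest_of_rank {n m : ℕ} (hm : m ≤ n) (v : Fin (n + 1) → ℝ)
    (h : (∑ i, if v i < v 0 then 1 else 0) < m) :
    v 0 ≤ kthSmallest (fun i : Fin n => v i.succ) m := by
  classical
  unfold kthSmallest
  apply le_csInf
  · refine ⟨∑ i : Fin n, |v i.succ|, ?_⟩
    have : {i : Fin n | v i.succ ≤ ∑ i : Fin n, |v i.succ|} = Set.univ := by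
      ext i
      simp only [Set.mem_ofPred_eq, Set.mem_univ, iff_true]
      exact (le_abs_self _).trans (Finset.single_le_sum
        (f := fun i : Fin n => |v i.succ|) (fun _ _ => abs_nonneg _) (Finset.mem_univ i))
    simp only [Set.mem_ofPred_eq, this, Set.ncard_univ, Nat.card_eq_fintype_card,
      Fintype.card_fin]
    exact hm
  · intro t ht
    by_contra hc
    push Not at hc
    simp only [Set.mem_ofPred_eq] at ht
    have h1 : {i : Fin n | v i.succ ≤ t}.ncard ≤
        (Finset.univ.filter (fun i : Fin n => v i.succ < v 0)).card := by
      rw [← Set.ncard_coe_finset]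
      apply Set.ncard_le_ncard
      · intro i hi
        simp only [Set.mem_ofPred_eq, Finset.coe_filter, Finset.mem_univ, true_and] at hi ⊢
        exact lt_of_le_of_lt hi hc
      · exact Set.toFinite _
    rw [Fin.sum_univ_succ] at h
    simp only [lt_irrefl, if_false, zero_add, Finset.sum_boole, Nat.cast_id] at h
    omega

/-- Rank bound for exchangeable real random variables. -/
lemma exch_rank_bound {Ω : Type*} [MeasurableSpace Ω]
    (P : Measure Ω) [IsProbabilityMeasure P] {n m : ℕ} (hm : m ≤ n + 1)
    (V : Fin (n + 1) → Ω → ℝ) (hV : ∀ i, Measurable (V i))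
    (hex : ∀ σ : Equiv.Perm (Fin (n + 1)),
      Measure.map (fun ω => fun i => V (σ i) ω) P = Measure.map (fun ω => fun i => V i ω) P) :
    (m : ENNReal) ≤
      (n + 1 : ℕ) * P {ω | (∑ i, if V i ω < V 0 ω then 1 else 0) < m} := by
  have hE : ∀ j : Fin (n + 1), MeasurableSet
      {v : Fin (n + 1) → ℝ | (∑ i, if v i < v j then 1 else 0) < m} := by
    intro j
    refine measurableSet_lt ?_ measurable_const
    refine Finset.measurable_sum _ (fun i _ => ?_)
    exact Measurable.ite (measurableSet_lt (measurable_pi_apply i) (measurable_pi_apply j))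
      measurable_const measurable_const
  have hVm : ∀ σ : Equiv.Perm (Fin (n + 1)), Measurable (fun ω => fun i => V (σ i) ω) :=
    fun σ => measurable_pi_lambda _ (fun i => hV _)
  have hV1 : Measurable (fun ω => fun i => V i ω) := hVm 1
  have hA : ∀ j, MeasurableSet {ω | (∑ i, if V i ω < V j ω then 1 else 0) < m} :=
    fun j => (hVm 1) (hE j)
  have heq : ∀ j, P {ω | (∑ i, if V i ω < V j ω then 1 else 0) < m} =
      P {ω | (∑ i, if V i ω < V 0 ω then 1 else 0) < m} := by
    intro j
    have h := congrArg (fun μ : Measure (Fin (n + 1) → ℝ) => μ {v : Fin (n + 1) → ℝ |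
      (∑ i, if v i < v 0 then 1 else 0) < m}) (hex (Equiv.swap 0 j))
    rw [Measure.map_apply (hVm _) (hE 0), Measure.map_apply hV1 (hE 0)] at h
    rw [Set.preimage_setOf_eq, Set.preimage_setOf_eq] at h
    simp only [Equiv.swap_apply_left, Equiv.Perm.coe_one, id] at h
    rw [← h]
    congr 1
    ext ω
    simp only [Set.mem_ofPred_eq]
    rw [Equiv.sum_comp (Equiv.swap 0 j) (fun i => if V i ω < V j ω then 1 else 0)]
  calc (m : ENNReal) = ∫⁻ _, (m : ENNReal) ∂P := by simp
    _ ≤ ∫⁻ ω, ∑ j, ({ω | (∑ i, if V i ω < V j ω then 1 else 0) < m}).indicator 1 ω ∂P := by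
        apply lintegral_mono
        intro ω
        have h := card_rank_ge hm (fun i => V i ω)
        have h2 : (m : ENNReal) ≤ ((∑ j, if (∑ i, if V i ω < V j ω then 1 else 0) < m
          then 1 else 0 : ℕ) : ENNReal) := by exact_mod_cast h
        refine h2.trans (le_of_eq ?_)
        rw [Nat.cast_sum]
        refine Finset.sum_congr rfl (fun j _ => ?_)
        simp only [Set.indicator_apply, Set.mem_ofPred_eq, Pi.one_apply, Nat.cast_ite,
          Nat.cast_one, Nat.cast_zero]
    _ = ∑ j, P {ω | (∑ i, if V i ω < V j ω then 1 else 0) < m} := by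
        rw [lintegral_finsetSum _ (fun j _ => measurable_one.indicator (hA j))]
        exact Finset.sum_congr rfl (fun j _ => lintegral_indicator_one (hA j))
    _ = _ := by
        simp only [heq]
        simp

/-- Let `α ∈ (0,1)`, `n ≥ 1`, `K ≥ 1` with `⌈(1−α)(n+1)⌉ ≤ n`. Let
`(Ẑ_0,Z_0), …, (Ẑ_n,Z_n)` be exchangeable random pairs in `ℝ^K × ℝ^K`, let
`s_k : ℝ × ℝ → ℝ` be measurable nonconformity scores, and `G_k : ℝ → ℝ` fixed nondecreasing
functions. With transformed scores `s̄_i = max_k G_k(s_k(Ẑ_{i,k}, Z_{i,k}))` and `λ̂` the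
`⌈(1−α)(n+1)⌉`-th smallest of `s̄_1, …, s̄_n`, one has
`Pr{ ∀ k, G_k(s_k(Ẑ_{0,k}, Z_{0,k})) ≤ λ̂ } ≥ 1 − α`. -/
theorem joint_marginal_coverage {Ω : Type*} [MeasurableSpace Ω]
    (P : Measure Ω) [IsProbabilityMeasure P]
    (α : ℝ) (hα : α ∈ Set.Ioo (0 : ℝ) 1)
    (n K : ℕ) (hn : 1 ≤ n) (hK : 1 ≤ K)
    (hceil : ⌈(1 - α) * (n + 1 : ℝ)⌉ ≤ (n : ℤ))
    (W : Fin (n + 1) → Ω → (Fin K → ℝ) × (Fin K → ℝ))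
    (hW : ∀ i, Measurable (W i))
    (hexch : ∀ σ : Equiv.Perm (Fin (n + 1)),
      Measure.map (fun ω => fun i => W (σ i) ω) P =
        Measure.map (fun ω => fun i => W i ω) P)
    (s : Fin K → ℝ → ℝ → ℝ)
    (hs : ∀ k, Measurable (fun q : ℝ × ℝ => s k q.1 q.2))
    (G : Fin K → ℝ → ℝ) (hG : ∀ k, Monotone (G k)) :
    ENNReal.ofReal (1 - α) ≤
      P {ω | ∀ k : Fin K,
        G k (s k ((W 0 ω).1 k) ((W 0 ω).2 k)) ≤
          kthSmallest
            (fun i : Fin n =>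
              Finset.univ.sup'
                (Finset.univ_nonempty_iff.mpr (Fin.pos_iff_nonempty.mp hK))
                (fun k' => G k' (s k' ((W i.succ ω).1 k') ((W i.succ ω).2 k'))))
            (⌈(1 - α) * (n + 1 : ℝ)⌉.toNat)} := by
  have hne : (Finset.univ : Finset (Fin K)).Nonempty :=
    Finset.univ_nonempty_iff.mpr (Fin.pos_iff_nonempty.mp hK)
  set g : (Fin K → ℝ) × (Fin K → ℝ) → ℝ := fun w =>
    Finset.univ.sup' (Finset.univ_nonempty_iff.mpr (Fin.pos_iff_nonempty.mp hK))
      (fun k' => G k' (s k' (w.1 k') (w.2 k'))) with hg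
  have hgm : Measurable g := by
    have h1 : ∀ k, Measurable (fun w : (Fin K → ℝ) × (Fin K → ℝ) =>
        G k (s k (w.1 k) (w.2 k))) := by
      intro k
      have h2 : Measurable (fun w : (Fin K → ℝ) × (Fin K → ℝ) => (w.1 k, w.2 k)) := by
        fun_prop
      exact (hG k).measurable.comp ((hs k).comp h2)
    have h3 := Finset.measurable_sup' hne (fun k _ => h1 k)
    convert h3 using 1
    ext w
    simp [hg, Finset.sup'_apply]
  set m := ⌈(1 - α) * (n + 1 : ℝ)⌉.toNat with hmdef
  have hmn : m ≤ n := by omega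
  have hml : (1 - α) * (n + 1 : ℝ) ≤ m := by
    refine (Int.le_ceil _).trans ?_
    have h0 : ⌈(1 - α) * (n + 1 : ℝ)⌉ ≤ (m : ℤ) := Int.self_le_toNat _
    have h1 : ((⌈(1 - α) * (n + 1 : ℝ)⌉ : ℤ) : ℝ) ≤ ((m : ℤ) : ℝ) := Int.cast_le.mpr h0
    simpa only [Int.cast_natCast] using h1
  have hWm : ∀ σ : Equiv.Perm (Fin (n + 1)), Measurable (fun ω => fun i => W (σ i) ω) :=
    fun σ => measurable_pi_lambda _ (fun i => hW _)
  have hW1 : Measurable (fun ω => fun i => W i ω) := hWm 1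
  have hgp : Measurable (fun (w : Fin (n + 1) → (Fin K → ℝ) × (Fin K → ℝ)) => fun i => g (w i)) :=
    measurable_pi_lambda _ (fun i => hgm.comp (measurable_pi_apply i))
  have key := exch_rank_bound P (m := m) (n := n) (by omega) (fun i ω => g (W i ω))
    (fun i => hgm.comp (hW i)) (by
      intro σ
      have h := congrArg (Measure.map (fun w => fun i => g (w i))) (hexch σ)
      rw [Measure.map_map hgp (hWm σ), Measure.map_map hgp hW1] at h
      exact h)
  have hsub : {ω | (∑ i, if g (W i ω) < g (W 0 ω) then 1 else 0) < m} ⊆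
      {ω | ∀ k : Fin K, G k (s k ((W 0 ω).1 k) ((W 0 ω).2 k)) ≤
          kthSmallest (fun i : Fin n => g (W i.succ ω)) m} := by
    intro ω hω k
    refine le_trans ?_ (le_kthSmallest_of_rank hmn (fun i => g (W i ω)) hω)
    exact Finset.le_sup' (fun k' => G k' (s k' ((W 0 ω).1 k') ((W 0 ω).2 k')))
      (Finset.mem_univ k)
  refine le_trans ?_ (measure_mono hsub)
  set p := P {ω | (∑ i, if g (W i ω) < g (W 0 ω) then 1 else 0) < m} with hp
  have hpt : p ≠ ⊤ := measure_ne_top _ _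
  rw [ENNReal.ofReal_le_iff_le_toReal hpt]
  have key2 := ENNReal.toReal_mono (ENNReal.mul_ne_top (ENNReal.natCast_ne_top _) hpt) key
  rw [ENNReal.toReal_mul, ENNReal.toReal_natCast, ENNReal.toReal_natCast] at key2
  push_cast at key2
  have hpos : (0 : ℝ) < n + 1 := by positivity
  nlinarith
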